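/- arXiv:1201.3315 — 2 statements merged into one kernel-verified Lean document; each statement's English description precedes it below -/
import Mathlib

section
/- Let α be a nonzero Lipschitz integer. Define right congruence modulo α on the Lipschitz integers by: q₁ ≡ᵣ q₂ if and only if q₁ − q₂ = δα for some Lipschitz integer δ. Then the set H(ℤ)_α of right-congruence classes of Lipschitz integers modulo α has exactly N(α)² elements. -/
open Quaternion

/-- The set `{δ * α : δ ∈ H(ℤ)}` of left multiples of a Lipschitz integer `α`,
as an additive subgroup of the Lipschitz integers `ℍ[ℤ]`.  Two Lipschitz integers
are right congruent modulo `α` iff their difference lies in this subgroup. -/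
def lipMultiples (α : ℍ[ℤ]) : AddSubgroup ℍ[ℤ] where
  carrier := Set.range (fun δ => δ * α)
  zero_mem' := ⟨0, zero_mul α⟩
  add_mem' := by rintro _ _ ⟨a, rfl⟩ ⟨b, rfl⟩; exact ⟨a + b, add_mul a b α⟩
  neg_mem' := by rintro _ ⟨a, rfl⟩; exact ⟨-a, neg_mul a α⟩

/-- `H(ℤ)_α`: the Lipschitz integers modulo right congruence modulo `α`. -/
abbrev LipMod (α : ℍ[ℤ]) := ℍ[ℤ] ⧸ lipMultiples α

/-! Right multiplication by `α` is a `ℤ`-linear endomorphism of `ℍ[ℤ]` whose range is the group of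
left multiples of `α`, so the number of classes is the absolute value of its determinant, and the
determinant of right multiplication by a quaternion is the square of its norm. -/

theorem index_range_eq_natAbs_det {M : Type*} [AddCommGroup M] [Module.Free ℤ M]
    [Module.Finite ℤ M] {f : M →ₗ[ℤ] M} (hf : Function.Injective f) :
    f.range.toAddSubgroup.index = f.det.natAbs := by
  classical
  let b := Module.Free.chooseBasis ℤ M
  let bRange : Module.Basis _ ℤ f.range := b.map (LinearEquiv.ofInjective f hf)
  calc
    f.range.toAddSubgroup.index = (b.det (f ∘ b)).natAbs :=
      AddSubgroup.index_eq_natAbs_det b f.range.toAddSubgroup bRange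
    _ = f.det.natAbs := by rw [b.det_comp, b.det_self, mul_one]

section

variable {R : Type*} [CommRing R] {c₁ c₂ c₃ : R}

theorem toMatrix_basisOneIJK_mulRight (a : ℍ[R,c₁,c₂,c₃]) :
    LinearMap.toMatrix (QuaternionAlgebra.basisOneIJK c₁ c₂ c₃)
        (QuaternionAlgebra.basisOneIJK c₁ c₂ c₃) (LinearMap.mulRight R a) =
      !![a.re, c₁ * a.imI, c₃ * a.imJ + c₂ * c₃ * a.imK, -(c₁ * c₃ * a.imK);
         a.imI, a.re + c₂ * a.imI, -(c₃ * a.imK), c₃ * a.imJ;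
         a.imJ, c₁ * a.imK, a.re + c₂ * a.imI, -(c₁ * a.imI);
         a.imK, a.imJ + c₂ * a.imK, -a.imI, a.re] := by
  ext i j
  rw [LinearMap.toMatrix_apply, LinearMap.mulRight_apply,
    QuaternionAlgebra.coe_basisOneIJK_repr]
  fin_cases i <;> fin_cases j <;>
    simp [QuaternionAlgebra.basisOneIJK, QuaternionAlgebra.equivTuple]

theorem re_mul_star_quaternionAlgebra (a : ℍ[R,c₁,c₂,c₃]) :
    (a * star a).re = a.re ^ 2 + c₂ * a.re * a.imI - c₁ * a.imI ^ 2 -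
      c₃ * (a.imJ ^ 2 + c₂ * a.imJ * a.imK - c₁ * a.imK ^ 2) := by
  simp only [QuaternionAlgebra.re_mul, QuaternionAlgebra.re_star, QuaternionAlgebra.imI_star,
    QuaternionAlgebra.imJ_star, QuaternionAlgebra.imK_star]
  ring

theorem det_mulRight_quaternionAlgebra (a : ℍ[R,c₁,c₂,c₃]) :
    (LinearMap.mulRight R a).det = (a * star a).re ^ 2 := by
  rw [← LinearMap.det_toMatrix (QuaternionAlgebra.basisOneIJK c₁ c₂ c₃),
    toMatrix_basisOneIJK_mulRight, re_mul_star_quaternionAlgebra,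
    Matrix.det_succ_row_zero, Fin.sum_univ_four]
  simp only [Matrix.det_fin_three, Matrix.submatrix_apply, Matrix.of_apply, Matrix.cons_val,
    Fin.succAbove, Fin.reduceSucc, Fin.reduceCastSucc, Fin.reduceLT, Fin.coe_ofNat_eq_mod,
    ↓reduceIte]
  ring

theorem det_mulRight_quaternion (a : ℍ[R]) :
    (LinearMap.mulRight R a).det = Quaternion.normSq a ^ 2 :=
  det_mulRight_quaternionAlgebra a

end

/-- For a nonzero Lipschitz integer `α`, the set `H(ℤ)_α` of right-congruence
classes of Lipschitz integers modulo `α` has exactly `N(α)²` elements. -/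
theorem card_lipMod (α : ℍ[ℤ]) (hα : α ≠ 0) :
    (Nat.card (LipMod α) : ℤ) = (Quaternion.normSq α) ^ 2 := by
  have h_inj : Function.Injective (LinearMap.mulRight ℤ α) := mul_left_injective₀ hα
  calc (Nat.card (LipMod α) : ℤ)
    _ = (LinearMap.mulRight ℤ α).range.toAddSubgroup.index := rfl
    _ = (LinearMap.mulRight ℤ α).det.natAbs := by rw [index_range_eq_natAbs_det h_inj]
    _ = (Quaternion.normSq α ^ 2).natAbs := by rw [det_mulRight_quaternion]
    _ = Quaternion.normSq α ^ 2 := Int.natAbs_of_nonneg (sq_nonneg _)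
end

section
/- Let π be a Gaussian prime with π·π̄ = p, where p ≡ 1 (mod 4) is a rational prime, and let n ≥ 1 and 1 ≤ k ≤ n. If C is an additive subgroup of G_π^n of cardinality p^k (an (n,k) linear code) that corrects all errors of Mannheim weight 1 or less, then p^{n−k} ≥ 4n + 1. -/
/-- The Mannheim weight of a residue class `x ∈ G_π = ℤ[i]/(π)`: the least value
of `|a| + |b|` over all Gaussian integers `a + bi` in the class `x`. -/
noncomputable def mWt (π : GaussianInt) (x : GaussianInt ⧸ Ideal.span {π}) : ℕ :=
  sInf {m | ∃ a b : ℤ, Ideal.Quotient.mk (Ideal.span {π}) ⟨a, b⟩ = x ∧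
    m = a.natAbs + b.natAbs}

/-- The Mannheim weight of a vector over `G_π` is the sum of the Mannheim
weights of its components. -/
noncomputable def mWtVec (π : GaussianInt) {n : ℕ}
    (v : Fin n → GaussianInt ⧸ Ideal.span {π}) : ℕ :=
  ∑ i, mWt π (v i)

/-- A code `C ⊆ G_π^n` corrects all errors of Mannheim weight `t` or less:
any two distinct vectors of Mannheim weight at most `t` lie in distinct cosets of `C`. -/
def CorrectsM (π : GaussianInt) {n : ℕ}
    (C : AddSubgroup (Fin n → GaussianInt ⧸ Ideal.span {π})) (t : ℕ) : Prop :=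
  ∀ u v : Fin n → GaussianInt ⧸ Ideal.span {π},
    mWtVec π u ≤ t → mWtVec π v ≤ t → u - v ∈ C → u = v

/-!
Vectors of weight at most one lie in distinct cosets of `C`, so there are at most `C.index` of them.
In `G_π` the class of `i` squares to `-1`, hence has multiplicative order four as soon as `π ∤ 2`;
its four powers, placed at any of the `n` positions, together with the zero vector give `4n + 1`
vectors of weight at most one. Finally `|G_π|` is the norm of `π`, so the index is `p^n / p^k`.
-/

open Function Zsqrtd

section Norm

variable {d : ℤ}

/-- The `ℤ`-basis `1, √d` of `ℤ√d`, used to compare `Zsqrtd.norm` with the determinant of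
multiplication. -/
noncomputable def zsqrtdBasis (d : ℤ) : Module.Basis (Fin 2) ℤ (ℤ√d) :=
  .ofEquivFun
    { toFun := fun z => ![z.re, z.im]
      invFun := fun v => ⟨v 0, v 1⟩
      map_add' := fun z w => by simp
      map_smul' := fun c z => by simp
      left_inv := fun z => rfl
      right_inv := fun v => by ext j; fin_cases j <;> rfl }

theorem zsqrtdBasis_repr (z : ℤ√d) : ⇑((zsqrtdBasis d).repr z) = ![z.re, z.im] :=
  rfl

theorem coe_zsqrtdBasis : ⇑(zsqrtdBasis d) = ![1, sqrtd] := by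
  funext j
  rw [Module.Basis.apply_eq_iff]
  apply DFunLike.coe_injective
  rw [zsqrtdBasis_repr, Finsupp.single_eq_pi_single]
  ext l
  fin_cases j <;> fin_cases l <;> rfl

theorem leftMulMatrix_zsqrtdBasis (z : ℤ√d) :
    Algebra.leftMulMatrix (zsqrtdBasis d) z = !![z.re, d * z.im; z.im, z.re] := by
  ext j l
  rw [Algebra.leftMulMatrix_eq_repr_mul, zsqrtdBasis_repr, coe_zsqrtdBasis]
  fin_cases j <;> fin_cases l <;> simp

theorem algebraNorm_eq_zsqrtdNorm (z : ℤ√d) : Algebra.norm ℤ z = z.norm := by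
  rw [Algebra.norm_eq_matrix_det (zsqrtdBasis d), leftMulMatrix_zsqrtdBasis, Matrix.det_fin_two_of,
    norm_def]

theorem card_gaussianInt_quotient_span_singleton (z : GaussianInt) :
    Nat.card (GaussianInt ⧸ Ideal.span {z}) = z.norm.natAbs := by
  have : Module.Free ℤ GaussianInt := .of_basis (zsqrtdBasis (-1))
  have : Module.Finite ℤ GaussianInt := .of_basis (zsqrtdBasis (-1))
  rw [← algebraNorm_eq_zsqrtdNorm]
  exact Ideal.absNorm_span_singleton z

theorem card_gaussianInt_quotient_vectors (z : GaussianInt) (n : ℕ) :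
    Nat.card (Fin n → GaussianInt ⧸ Ideal.span {z}) = z.norm.natAbs ^ n := by
  rw [Nat.card_fun, Nat.card_fin, card_gaussianInt_quotient_span_singleton]

theorem not_dvd_two_of_odd_norm {z : ℤ√d} (hz : ¬IsUnit z) (hodd : Odd z.norm) : ¬z ∣ 2 := by
  intro hdvd
  have hnorm_two : (2 : ℤ√d).norm = 2 ^ 2 := norm_natCast 2
  have hnorm_dvd : z.norm ∣ 2 ^ 2 := hnorm_two ▸ map_dvd normMonoidHom hdvd
  have hcoprime : IsCoprime z.norm (2 ^ 2) := (Int.isCoprime_two_right.mpr hodd).pow_right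
  exact hz ((isUnit_iff_norm_isUnit z).mpr (hcoprime.isUnit_of_dvd' dvd_rfl hnorm_dvd))

end Norm

theorem index_eq_pow_sub_of_card_eq_pow {A : Type*} [AddGroup A] {C : AddSubgroup A} {q n k : ℕ}
    (hq : 0 < q) (hkn : k ≤ n) (hA : Nat.card A = q ^ n) (hC : Nat.card C = q ^ k) :
    C.index = q ^ (n - k) := by
  refine Nat.eq_of_mul_eq_mul_left (pow_pos hq k) ?_
  rw [← hC, C.card_mul_index, hA, hC, pow_mul_pow_sub q hkn]

section SqEqNegOne

variable {R : Type*} [Ring R] {i : R}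

theorem orderOf_eq_four_of_sq_eq_neg_one (hi : i ^ 2 = -1) (h2 : (2 : R) ≠ 0) :
    orderOf i = 4 := by
  refine orderOf_eq_prime_pow (p := 2) (n := 1) ?_ ?_
  · rwa [pow_one, hi, neg_eq_iff_add_eq_zero, one_add_one_eq_two]
  · rw [pow_succ, pow_one, pow_mul, hi, neg_one_sq]

theorem pow_injective_of_sq_eq_neg_one (hi : i ^ 2 = -1) (h2 : (2 : R) ≠ 0) :
    Injective fun j : Fin 4 => i ^ (j : ℕ) := by
  intro j l h
  have hord := orderOf_eq_four_of_sq_eq_neg_one hi h2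
  exact Fin.ext (pow_injOn_Iio_orderOf (j.isLt.trans_eq hord.symm) (l.isLt.trans_eq hord.symm) h)

theorem isUnit_of_sq_eq_neg_one (hi : i ^ 2 = -1) : IsUnit i :=
  (isUnit_pow_iff two_ne_zero).mp (hi ▸ isUnit_one.neg)

end SqEqNegOne

section SingleOrZero

variable {ι κ M : Type*} [DecidableEq ι] [Zero M]

/-- The vectors with at most one nonzero entry, that entry being a value of `f`: the zero vector at
`none`, and `f k` in position `i` at `some (i, k)`. -/
def singleOrZero (f : κ → M) (e : Option (ι × κ)) : ι → M :=
  e.elim 0 fun x => Pi.single x.1 (f x.2)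

theorem singleOrZero_injective {f : κ → M} (hf : Injective f) (hf0 : ∀ k, f k ≠ 0) :
    Injective (singleOrZero (ι := ι) f) := by
  refine Option.injective_iff.mpr ⟨?_, ?_⟩
  · rintro ⟨i, k⟩ ⟨i', k'⟩ (h : (Pi.single i (f k) : ι → M) = Pi.single i' (f k'))
    obtain rfl : i = i' := by
      by_contra hne
      exact hf0 k (by simpa [hne] using congrFun h i)
    rw [hf (Pi.single_injective i h)]
  · rintro ⟨⟨i, k⟩, h⟩
    exact hf0 k (Pi.single_eq_zero_iff.mp h)

end SingleOrZero

section MannheimWeight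

variable (π : GaussianInt) {n : ℕ}

theorem mWt_mk_le (z : GaussianInt) :
    mWt π (Ideal.Quotient.mk (Ideal.span {π}) z) ≤ z.re.natAbs + z.im.natAbs :=
  Nat.sInf_le ⟨z.re, z.im, rfl, rfl⟩

theorem mWt_zero : mWt π 0 = 0 := by
  simpa using mWt_mk_le π 0

theorem mWt_mk_sqrtd_pow_le_one (j : Fin 4) :
    mWt π (Ideal.Quotient.mk (Ideal.span {π}) sqrtd ^ (j : ℕ)) ≤ 1 := by
  rw [← map_pow]
  refine (mWt_mk_le π _).trans ?_
  fin_cases j <;> simp [pow_succ]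

theorem mWtVec_zero : mWtVec π (0 : Fin n → GaussianInt ⧸ Ideal.span {π}) = 0 := by
  simp [mWtVec, mWt_zero]

theorem mWtVec_single (i : Fin n) (x : GaussianInt ⧸ Ideal.span {π}) :
    mWtVec π (Pi.single i x) = mWt π x := by
  rw [mWtVec, Fintype.sum_eq_single i fun j hj => by rw [Pi.single_eq_of_ne hj, mWt_zero],
    Pi.single_eq_same]

theorem mWtVec_singleOrZero_le {κ : Type*} {f : κ → GaussianInt ⧸ Ideal.span {π}} {t : ℕ}
    (hf : ∀ k, mWt π (f k) ≤ t) (e : Option (Fin n × κ)) : mWtVec π (singleOrZero f e) ≤ t := by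
  rcases e with _ | ⟨i, k⟩
  · exact (mWtVec_zero π).trans_le t.zero_le
  · exact (mWtVec_single π i (f k)).trans_le (hf k)

variable {π}

theorem CorrectsM.injOn_mk {C : AddSubgroup (Fin n → GaussianInt ⧸ Ideal.span {π})} {t : ℕ}
    (hC : CorrectsM π C t) :
    Set.InjOn (QuotientAddGroup.mk : _ → (Fin n → GaussianInt ⧸ Ideal.span {π}) ⧸ C)
      {v | mWtVec π v ≤ t} :=
  fun u hu v hv h => hC u v hu hv (QuotientAddGroup.eq_iff_sub_mem.mp h)

theorem CorrectsM.card_le_index {C : AddSubgroup (Fin n → GaussianInt ⧸ Ideal.span {π})}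
    [C.FiniteIndex] {t : ℕ} (hC : CorrectsM π C t) {α : Type*}
    {e : α → Fin n → GaussianInt ⧸ Ideal.span {π}} (he : Injective e)
    (hwt : ∀ a, mWtVec π (e a) ≤ t) : Nat.card α ≤ C.index :=
  Nat.card_le_card_of_injective (fun a => (e a : (Fin n → GaussianInt ⧸ Ideal.span {π}) ⧸ C))
    fun a b h => he (hC.injOn_mk (hwt a) (hwt b) h)

end MannheimWeight

theorem mk_sqrtd_sq (π : GaussianInt) :
    Ideal.Quotient.mk (Ideal.span {π}) sqrtd ^ 2 = -1 := by
  rw [← map_pow, sq, dmuld, Int.cast_neg, Int.cast_one, map_neg, map_one]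

theorem sphere_packing_mannheim_wt_one_general {π : GaussianInt} (hπ : ¬π ∣ 2) {n : ℕ}
    {C : AddSubgroup (Fin n → GaussianInt ⧸ Ideal.span {π})} [C.FiniteIndex]
    (hcorr : CorrectsM π C 1) : 4 * n + 1 ≤ C.index := by
  set i := Ideal.Quotient.mk (Ideal.span {π}) sqrtd
  have hi : i ^ 2 = -1 := mk_sqrtd_sq π
  have h2 : (2 : GaussianInt ⧸ Ideal.span {π}) ≠ 0 := fun h =>
    hπ ((Ideal.Quotient.eq_zero_iff_dvd π 2).mp h)
  have : Nontrivial (GaussianInt ⧸ Ideal.span {π}) := nontrivial_of_ne _ _ h2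
  have hinj : Injective (singleOrZero (ι := Fin n) fun j : Fin 4 => i ^ (j : ℕ)) :=
    singleOrZero_injective (pow_injective_of_sq_eq_neg_one hi h2)
      fun j => ((isUnit_of_sq_eq_neg_one hi).pow j).ne_zero
  calc 4 * n + 1 = Nat.card (Option (Fin n × Fin 4)) := by simp [mul_comm]
    _ ≤ C.index :=
      hcorr.card_le_index hinj (mWtVec_singleOrZero_le π (mWt_mk_sqrtd_pow_le_one π))

/-- An `(n, k)` linear code over `G_π` (`π` a Gaussian prime with `π·π̄ = p`,
`p ≡ 1 (mod 4)` a rational prime) correcting all errors of Mannheim weight 1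
or less satisfies `p^(n-k) ≥ 4n + 1`. -/
theorem sphere_packing_mannheim_wt_one (π : GaussianInt) (hπ : Prime π)
    (p : ℕ) (hp : p.Prime) (hp4 : p % 4 = 1) (hnorm : Zsqrtd.norm π = (p : ℤ))
    (n k : ℕ) (hn : 1 ≤ n) (hk : 1 ≤ k) (hkn : k ≤ n)
    (C : AddSubgroup (Fin n → GaussianInt ⧸ Ideal.span {π}))
    (hcard : Nat.card C = p ^ k)
    (hcorr : CorrectsM π C 1) :
    4 * n + 1 ≤ p ^ (n - k) := by
  have hodd : Odd π.norm := by
    rw [hnorm, Int.odd_coe_nat, Nat.odd_iff]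
    lia
  have hspace : Nat.card (Fin n → GaussianInt ⧸ Ideal.span {π}) = p ^ n := by
    rw [card_gaussianInt_quotient_vectors, hnorm, Int.natAbs_natCast]
  have hindex : C.index = p ^ (n - k) :=
    index_eq_pow_sub_of_card_eq_pow hp.pos hkn hspace hcard
  have : C.FiniteIndex := ⟨hindex ▸ (pow_pos hp.pos _).ne'⟩
  exact hindex ▸
    sphere_packing_mannheim_wt_one_general (not_dvd_two_of_odd_norm hπ.not_isUnit hodd) hcorr
end
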